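/- Let t₁, t₂ ≥ 0 with t₁ + t₂ = 1. The measure η_{t₁,t₂} on Gr(V) is quasi-invariant under the action of GLB, with cocycle given explicitly as follows: for every g ∈ GLB and every measurable set A ⊆ Gr(V), η_{t₁,t₂}(g·A) = ∫_A q^{Σ_k k·(Sym(X)_k − Sym(gX)_k)} η_{t₁,t₂}(dX), where for each X and g the sum Σ_k k·(Sym(X)_k − Sym(gX)_k) has only finitely many nonzero terms. (Proposition 5.7: fundamental cocycle of the GLB-action on the grassmannian.) -/

import Mathlib

open MeasureTheory

variable (F : Type) [Field F] [Fintype F] [DecidableEq F]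

/-- `V = ⊕_{i≥0} F`: the `F`-vector space of finitely supported sequences. -/
abbrev Vinf := ℕ →₀ F

/-- `V_n`: the span of the first `n` standard basis vectors of `V`. -/
def Vn (n : ℕ) : Submodule F (Vinf F) where
  carrier := {v | ∀ i : ℕ, n ≤ i → v i = 0}
  add_mem' := by
    intro a b ha hb i hi
    simp [Finsupp.add_apply, ha i hi, hb i hi]
  zero_mem' := by
    intro i hi
    simp
  smul_mem' := by
    intro c v hv i hi
    simp [Finsupp.smul_apply, hv i hi]

/-- The group `GLB` of `F`-linear automorphisms `g` of `V` with `g(V_n) = V_n` for all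
sufficiently large `n`. -/
def GLBgrp : Subgroup ((Vinf F) ≃ₗ[F] (Vinf F)) where
  carrier := {g | ∃ N : ℕ, ∀ n : ℕ, N ≤ n →
    Submodule.map (g : (Vinf F) →ₗ[F] (Vinf F)) (Vn F n) = Vn F n}
  one_mem' := by
    refine ⟨0, fun n _ => ?_⟩
    have h1 : ((1 : (Vinf F) ≃ₗ[F] (Vinf F)) : (Vinf F) →ₗ[F] (Vinf F)) = LinearMap.id := by
      ext x; rfl
    rw [h1, Submodule.map_id]
  mul_mem' := by
    rintro g h ⟨Ng, hg⟩ ⟨Nh, hh⟩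
    refine ⟨max Ng Nh, fun n hn => ?_⟩
    have h1 : ((g * h : (Vinf F) ≃ₗ[F] (Vinf F)) : (Vinf F) →ₗ[F] (Vinf F))
        = ((g : (Vinf F) →ₗ[F] (Vinf F)).comp (h : (Vinf F) →ₗ[F] (Vinf F))) := by
      ext x; rfl
    rw [h1, Submodule.map_comp, hh n (le_trans (le_max_right _ _) hn),
      hg n (le_trans (le_max_left _ _) hn)]
  inv_mem' := by
    rintro g ⟨N, hg⟩
    refine ⟨N, fun n hn => ?_⟩
    conv_lhs => rw [← hg n hn]
    rw [← Submodule.map_comp]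
    have h1 : ((g⁻¹ : (Vinf F) ≃ₗ[F] (Vinf F)) : (Vinf F) →ₗ[F] (Vinf F)).comp
        ((g : (Vinf F) →ₗ[F] (Vinf F))) = LinearMap.id := by
      have h0 : ((g⁻¹ * g : (Vinf F) ≃ₗ[F] (Vinf F)) : (Vinf F) →ₗ[F] (Vinf F))
          = ((g⁻¹ : (Vinf F) ≃ₗ[F] (Vinf F)) : (Vinf F) →ₗ[F] (Vinf F)).comp
            ((g : (Vinf F) →ₗ[F] (Vinf F))) := by
        ext x; rfl
      rw [← h0, inv_mul_cancel]
      ext x; rfl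
    rw [h1, Submodule.map_id]

/-- The Borel subgroup `B ⊆ GLB` of automorphisms with `g(V_n) = V_n` for all `n`. -/
def Bgrp : Subgroup ((Vinf F) ≃ₗ[F] (Vinf F)) where
  carrier := {g | ∀ n : ℕ,
    Submodule.map (g : (Vinf F) →ₗ[F] (Vinf F)) (Vn F n) = Vn F n}
  one_mem' := by
    intro n
    have h1 : ((1 : (Vinf F) ≃ₗ[F] (Vinf F)) : (Vinf F) →ₗ[F] (Vinf F)) = LinearMap.id := by
      ext x; rfl
    rw [h1, Submodule.map_id]
  mul_mem' := by
    intro g h hg hh n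
    have h1 : ((g * h : (Vinf F) ≃ₗ[F] (Vinf F)) : (Vinf F) →ₗ[F] (Vinf F))
        = ((g : (Vinf F) →ₗ[F] (Vinf F)).comp (h : (Vinf F) →ₗ[F] (Vinf F))) := by
      ext x; rfl
    rw [h1, Submodule.map_comp, hh n, hg n]
  inv_mem' := by
    intro g hg n
    conv_lhs => rw [← hg n]
    rw [← Submodule.map_comp]
    have h1 : ((g⁻¹ : (Vinf F) ≃ₗ[F] (Vinf F)) : (Vinf F) →ₗ[F] (Vinf F)).comp
        ((g : (Vinf F) →ₗ[F] (Vinf F))) = LinearMap.id := by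
      have h0 : ((g⁻¹ * g : (Vinf F) ≃ₗ[F] (Vinf F)) : (Vinf F) →ₗ[F] (Vinf F))
          = ((g⁻¹ : (Vinf F) ≃ₗ[F] (Vinf F)) : (Vinf F) →ₗ[F] (Vinf F)).comp
            ((g : (Vinf F) →ₗ[F] (Vinf F))) := by
        ext x; rfl
      rw [← h0, inv_mul_cancel]
      ext x; rfl
    rw [h1, Submodule.map_id]

/-- The Borel σ-algebra of `B` for the topology of pointwise convergence: the σ-algebra
generated by the evaluations `g ↦ g(e_i)` (with the finite set `V` discrete). -/
noncomputable instance mB : MeasurableSpace ↥(Bgrp F) := by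
  letI : MeasurableSpace (Vinf F) := ⊤
  exact MeasurableSpace.comap
    (fun g => fun i : ℕ => ((g : (Vinf F) ≃ₗ[F] (Vinf F)) (Finsupp.single i 1)))
    MeasurableSpace.pi

/-- The increment `Sym(X)_{k+1} = dim(X ∩ V_{k+1}) - dim(X ∩ V_k)` of the symbol of a
subspace `X ⊆ V` (0-based indexing: `symInc X k` is the `(k+1)`-st, 1-based, entry). -/
noncomputable def symInc (X : Submodule F (Vinf F)) (k : ℕ) : ℕ :=
  Module.finrank F ↥(X ⊓ Vn F (k + 1)) - Module.finrank F ↥(X ⊓ Vn F k)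

/-- The coordinate subspace `C(x) = span{e_i : x_i = 1}` of a 0–1 sequence `x`. -/
noncomputable def coordSpan (x : ℕ → Bool) : Submodule F (Vinf F) :=
  Submodule.span F ((fun i : ℕ => Finsupp.single i (1 : F)) '' {i : ℕ | x i = true})

/-- The map `φ : {0,1}^ℕ × B → Gr(V)`, `(x, g) ↦ g·C(x)`. -/
noncomputable def phiMap (p : (ℕ → Bool) × ↥(Bgrp F)) : Submodule F (Vinf F) :=
  Submodule.map ((p.2 : (Vinf F) ≃ₗ[F] (Vinf F)) : (Vinf F) →ₗ[F] (Vinf F)) (coordSpan F p.1)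

/-- The cylinder σ-algebra of the grassmannian `Gr(V)`, generated by the sets
`{X : X ∩ V_n = Y}`. -/
noncomputable instance mGr : MeasurableSpace (Submodule F (Vinf F)) :=
  MeasurableSpace.generateFrom
    {A | ∃ (n : ℕ) (Y : Submodule F (Vinf F)), A = {X | X ⊓ Vn F n = Y}}

/-! ### Linear algebra of the flag -/

theorem mem_Vn_iff {n : ℕ} {v : Vinf F} : v ∈ Vn F n ↔ ∀ i : ℕ, n ≤ i → v i = 0 := Iff.rfl

theorem Vn_mono {m n : ℕ} (h : m ≤ n) : Vn F m ≤ Vn F n :=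
  fun _ hv i hi => hv i (h.trans hi)

theorem Vn_zero : Vn F 0 = ⊥ := by
  rw [eq_bot_iff]
  intro v hv
  rw [Submodule.mem_bot]
  ext i
  exact hv i (Nat.zero_le i)

theorem Vn_eq_supported (n : ℕ) : Vn F n = Finsupp.supported F F (Set.Iio n) := by
  ext v
  rw [Finsupp.mem_supported', mem_Vn_iff]
  simp

instance finiteDimVn (n : ℕ) : FiniteDimensional F (Vn F n) := by
  rw [Vn_eq_supported]
  exact Module.Finite.equiv (Finsupp.supportedEquivFinsupp (R := F) (M := F) (Set.Iio n)).symm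

theorem finrank_Vn (n : ℕ) : Module.finrank F (Vn F n) = n := by
  rw [Vn_eq_supported,
    (Finsupp.supportedEquivFinsupp (R := F) (M := F) (Set.Iio n)).finrank_eq]
  simp

instance finiteVn (n : ℕ) : Finite (Vn F n) := Module.finite_of_finite F

instance finiteDimInf (X : Submodule F (Vinf F)) (n : ℕ) :
    FiniteDimensional F ↥(X ⊓ Vn F n) :=
  Submodule.finiteDimensional_of_le (inf_le_right)

theorem finDim_of_le {X : Submodule F (Vinf F)} {n : ℕ} (h : X ≤ Vn F n) :
    FiniteDimensional F X := Submodule.finiteDimensional_of_le h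

theorem finite_le_Vn (n : ℕ) : {Y : Submodule F (Vinf F) | Y ≤ Vn F n}.Finite := by
  have h : ((Vn F n : Set (Vinf F))).Finite :=
    Set.finite_coe_iff.1 (finiteVn F n)
  refine Set.Finite.of_finite_image (f := fun Y : Submodule F (Vinf F) => (Y : Set (Vinf F)))
    (h.finite_subsets.subset ?_) (SetLike.coe_injective.injOn)
  rintro _ ⟨Y, hY, rfl⟩
  exact hY

/-- position `k` is a pivot of `X`. -/
def HasPivot (X : Submodule F (Vinf F)) (k : ℕ) : Prop :=
  ∃ v : Vinf F, v ∈ X ∧ v ∈ Vn F (k + 1) ∧ v k = 1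

open Classical in
/-- the 0-1 sequence of pivots of `X`. -/
noncomputable def pivSeq (X : Submodule F (Vinf F)) (k : ℕ) : Bool := decide (HasPivot F X k)

theorem pivSeq_true {X : Submodule F (Vinf F)} {k : ℕ} :
    pivSeq F X k = true ↔ HasPivot F X k := by simp [pivSeq]

theorem mem_Vn_of_succ {k : ℕ} {v : Vinf F} (h : v ∈ Vn F (k + 1)) (hk : v k = 0) :
    v ∈ Vn F k := by
  intro i hi
  rcases Nat.eq_or_lt_of_le hi with rfl | h1
  · exact hk
  · exact h i h1

theorem step_false {X : Submodule F (Vinf F)} {k : ℕ} (h : ¬ HasPivot F X k) :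
    X ⊓ Vn F (k + 1) = X ⊓ Vn F k := by
  apply le_antisymm
  · rintro v ⟨hX, hv⟩
    refine ⟨hX, mem_Vn_of_succ F hv ?_⟩
    by_contra hne
    exact h ⟨(v k)⁻¹ • v, X.smul_mem _ hX, (Vn F (k+1)).smul_mem _ hv, by simp [hne]⟩
  · exact inf_le_inf_left _ (Vn_mono F (Nat.le_succ k))

theorem eq_of_common {Z Z' : Submodule F (Vinf F)} {n : ℕ} (hZ : Z ≤ Vn F (n + 1))
    (hi : Z ⊓ Vn F n ≤ Z') {v : Vinf F} (hv : v ∈ Z) (hv' : v ∈ Z') (hn : v n = 1) :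
    Z ≤ Z' := by
  intro x hx
  have h1 : x - x n • v ∈ Z := Z.sub_mem hx (Z.smul_mem _ hv)
  have h2 : x - x n • v ∈ Vn F n := mem_Vn_of_succ F (hZ h1) (by simp [hn])
  have h3 := Z'.add_mem (hi ⟨h1, h2⟩) (Z'.smul_mem (x n) hv')
  simpa using h3

theorem step_true {X : Submodule F (Vinf F)} {k : ℕ} (h : HasPivot F X k) :
    Module.finrank F ↥(X ⊓ Vn F (k + 1)) = Module.finrank F ↥(X ⊓ Vn F k) + 1 := by
  obtain ⟨v, hX, hv, hk⟩ := h
  have hs : X ⊓ Vn F (k + 1) = (X ⊓ Vn F k) ⊔ Submodule.span F {v} := by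
    apply le_antisymm
    · refine eq_of_common F (n := k) inf_le_right ?_ (v := v) ⟨hX, hv⟩ ?_ hk
      · rintro w ⟨⟨h1, _⟩, h2⟩
        exact Submodule.mem_sup_left ⟨h1, h2⟩
      · exact Submodule.mem_sup_right (Submodule.mem_span_singleton_self v)
    · refine sup_le (inf_le_inf_left _ (Vn_mono F (Nat.le_succ k))) ?_
      rw [Submodule.span_singleton_le_iff_mem]
      exact ⟨hX, hv⟩
  have hd : (X ⊓ Vn F k) ⊓ Submodule.span F {v} = ⊥ := by
    rw [eq_bot_iff]
    rintro w ⟨⟨_, h1⟩, h2⟩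
    obtain ⟨c, rfl⟩ := Submodule.mem_span_singleton.1 h2
    have : (c • v) k = 0 := h1 k le_rfl
    simp [hk] at this
    simp [this]
  have hv0 : v ≠ 0 := by rintro rfl; simp at hk
  have := Submodule.finrank_sup_add_finrank_inf_eq (X ⊓ Vn F k) (Submodule.span F {v})
  rw [hd, finrank_bot, finrank_span_singleton hv0, ← hs] at this
  simpa using this

theorem symInc_eq (X : Submodule F (Vinf F)) (k : ℕ) :
    symInc F X k = if pivSeq F X k = true then 1 else 0 := by
  unfold symInc
  split_ifs with h
  · rw [step_true F ((pivSeq_true F).1 h)]; simp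
  · rw [step_false F (fun h' => h ((pivSeq_true F).2 h'))]; simp

theorem pivSeq_congr {X Y : Submodule F (Vinf F)} {k : ℕ} (h : symInc F X k = symInc F Y k) :
    pivSeq F X k = pivSeq F Y k := by
  rw [symInc_eq, symInc_eq] at h
  cases hx : pivSeq F X k <;> cases hy : pivSeq F Y k <;> simp_all

theorem finrank_step (X : Submodule F (Vinf F)) (k : ℕ) :
    Module.finrank F ↥(X ⊓ Vn F (k + 1)) = Module.finrank F ↥(X ⊓ Vn F k) + symInc F X k := by
  rw [symInc_eq]
  split_ifs with h
  · rw [step_true F ((pivSeq_true F).1 h)]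
  · rw [step_false F (fun h' => h ((pivSeq_true F).2 h'))]; simp

theorem finrank_eq_sum (X : Submodule F (Vinf F)) (n : ℕ) :
    Module.finrank F ↥(X ⊓ Vn F n) = ∑ k ∈ Finset.range n, symInc F X k := by
  induction n with
  | zero => rw [Vn_zero]; simp
  | succ n ih => rw [finrank_step, ih, Finset.sum_range_succ]

theorem map_inf_Vn (g : (Vinf F) ≃ₗ[F] (Vinf F)) {n : ℕ}
    (h : Submodule.map (g : (Vinf F) →ₗ[F] (Vinf F)) (Vn F n) = Vn F n)
    (X : Submodule F (Vinf F)) :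
    Submodule.map (g : (Vinf F) →ₗ[F] (Vinf F)) X ⊓ Vn F n
      = Submodule.map (g : (Vinf F) →ₗ[F] (Vinf F)) (X ⊓ Vn F n) := by
  rw [Submodule.map_inf _ g.injective, h]

theorem symInc_map (g : (Vinf F) ≃ₗ[F] (Vinf F)) {k : ℕ}
    (h : Submodule.map (g : (Vinf F) →ₗ[F] (Vinf F)) (Vn F k) = Vn F k)
    (h' : Submodule.map (g : (Vinf F) →ₗ[F] (Vinf F)) (Vn F (k + 1)) = Vn F (k + 1))
    (X : Submodule F (Vinf F)) :
    symInc F (Submodule.map (g : (Vinf F) →ₗ[F] (Vinf F)) X) k = symInc F X k := by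
  unfold symInc
  rw [map_inf_Vn F g h, map_inf_Vn F g h', LinearEquiv.finrank_map_eq, LinearEquiv.finrank_map_eq]

theorem symInc_inf {n k : ℕ} (h : k < n) (X : Submodule F (Vinf F)) :
    symInc F (X ⊓ Vn F n) k = symInc F X k := by
  unfold symInc
  rw [inf_assoc, inf_assoc, inf_eq_right.2 (Vn_mono F (show k + 1 ≤ n from h)),
    inf_eq_right.2 (Vn_mono F (le_of_lt h))]

theorem pivSeq_of_le {n k : ℕ} (h : n ≤ k) {X : Submodule F (Vinf F)} (hX : X ≤ Vn F n) :
    pivSeq F X k = false := by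
  rw [← Bool.not_eq_true, pivSeq_true]
  rintro ⟨v, hv, _, h1⟩
  rw [hX hv k h] at h1
  exact zero_ne_one h1

/-! ### Coordinate subspaces -/

theorem mem_coordSpan {x : ℕ → Bool} {v : Vinf F} :
    v ∈ coordSpan F x ↔ ∀ i, x i = false → v i = 0 := by
  rw [coordSpan, ← Finsupp.supported_eq_span_single, Finsupp.mem_supported']
  simp

theorem pivSeq_coordSpan (x : ℕ → Bool) (k : ℕ) : pivSeq F (coordSpan F x) k = x k := by
  rw [Bool.eq_iff_iff, pivSeq_true]
  constructor
  · rintro ⟨v, hv, _, h1⟩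
    by_contra hx
    rw [(mem_coordSpan F).1 hv k (by simpa using hx)] at h1
    exact zero_ne_one h1
  · intro hx
    refine ⟨Finsupp.single k 1, (mem_coordSpan F).2 ?_, ?_, by simp⟩
    · intro i hi
      rw [Finsupp.single_apply, if_neg]
      rintro rfl
      simp [hx] at hi
    · intro i hi
      rw [Finsupp.single_apply, if_neg]
      omega

theorem coordSpan_le {x : ℕ → Bool} {n : ℕ} (h : ∀ k, n ≤ k → x k = false) :
    coordSpan F x ≤ Vn F n :=
  fun _ hv i hi => (mem_coordSpan F).1 hv i (h i hi)

theorem coordSpan_inf {x c : ℕ → Bool} {n : ℕ} (hc : ∀ k, n ≤ k → c k = false)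
    (h : ∀ k, k < n → x k = c k) : coordSpan F x ⊓ Vn F n = coordSpan F c := by
  ext v
  rw [Submodule.mem_inf, mem_coordSpan, mem_coordSpan, mem_Vn_iff]
  constructor
  · rintro ⟨h1, h2⟩ i hi
    rcases lt_or_ge i n with hn | hn
    · exact h1 i (by rw [h i hn, hi])
    · exact h2 i hn
  · intro h1
    refine ⟨fun i hi => ?_, fun i hi => h1 i (hc i hi)⟩
    rcases lt_or_ge i n with hn | hn
    · exact h1 i (by rw [← h i hn, hi])
    · exact h1 i (hc i hn)

theorem coordSpan_pivSeq_le {Y : Submodule F (Vinf F)} {n : ℕ} (hY : Y ≤ Vn F n) :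
    coordSpan F (pivSeq F Y) ≤ Vn F n :=
  coordSpan_le F fun _ hk => pivSeq_of_le F hk hY

theorem coordSpan_pivSeq_inf (Y : Submodule F (Vinf F)) (n : ℕ) :
    coordSpan F (pivSeq F Y) ⊓ Vn F n = coordSpan F (pivSeq F (Y ⊓ Vn F n)) :=
  coordSpan_inf F (fun _ hk => pivSeq_of_le F hk inf_le_right)
    (fun _ hk => pivSeq_congr F (symInc_inf F hk Y).symm)

/-- abbreviation for the image of a subspace. -/
noncomputable abbrev act (g : (Vinf F) ≃ₗ[F] (Vinf F)) (X : Submodule F (Vinf F)) : Submodule F (Vinf F) :=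
  Submodule.map (g : (Vinf F) →ₗ[F] (Vinf F)) X

theorem act_le_Vn (b : Bgrp F) {n : ℕ} {X : Submodule F (Vinf F)} (h : X ≤ Vn F n) :
    act F b X ≤ Vn F n := by
  have := Submodule.map_mono (f := ((b : (Vinf F) ≃ₗ[F] (Vinf F)) : (Vinf F) →ₗ[F] (Vinf F))) h
  rwa [b.2 n] at this

theorem pivSeq_act (b : Bgrp F) (X : Submodule F (Vinf F)) :
    pivSeq F (act F b X) = pivSeq F X :=
  funext fun k => pivSeq_congr F (symInc_map F _ (b.2 k) (b.2 (k+1)) X)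

/-- description of the preimage of a cylinder. -/
theorem phi_preimage {n : ℕ} {Y : Submodule F (Vinf F)} (hY : Y ≤ Vn F n) :
    phiMap F ⁻¹' {X | X ⊓ Vn F n = Y}
      = {ω : ℕ → Bool | ∀ i : Fin n, ω (i : ℕ) = pivSeq F Y i} ×ˢ
        {b : Bgrp F | act F b (coordSpan F (pivSeq F Y)) = Y} := by
  ext ⟨x, b⟩
  simp only [Set.mem_preimage, Set.mem_ofPred_eq, Set.mem_prod, phiMap]
  rw [map_inf_Vn F _ (b.2 n)]
  constructor
  · intro h
    have h1 : ∀ k, k < n → x k = pivSeq F Y k := by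
      intro k hk
      rw [← h, ← pivSeq_coordSpan F x k]
      have := congrFun (pivSeq_act F b (coordSpan F x ⊓ Vn F n)) k
      rw [act] at this
      rw [this]
      exact pivSeq_congr F (symInc_inf F hk _).symm
    refine ⟨fun i => h1 i i.2, ?_⟩
    rw [coordSpan_inf F (fun k hk => pivSeq_of_le F hk hY) h1] at h
    exact h
  · rintro ⟨h1, h2⟩
    rw [coordSpan_inf F (fun k hk => pivSeq_of_le F hk hY) (fun k hk => h1 ⟨k, hk⟩)]
    exact h2

/-! ### Transvections -/

theorem trans_mem {n : ℕ} {w : Vinf F} (hw : w ∈ Vn F n) :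
    LinearEquiv.transvection (f := Finsupp.lapply (R := F) n) (v := w) (hw n le_rfl) ∈ Bgrp F := by
  have key : ∀ (w : Vinf F), w ∈ Vn F n → ∀ m, ∀ x ∈ Vn F m, x + x n • w ∈ Vn F m := by
    intro w hw m x hx
    rcases le_or_gt m n with h | h
    · rw [hx n h]; simpa using hx
    · exact (Vn F m).add_mem hx ((Vn F m).smul_mem _ (Vn_mono F h.le hw))
  intro m
  apply le_antisymm
  · rintro _ ⟨x, hx, rfl⟩
    have := key w hw m x hx
    exact this
  · intro x hx
    refine ⟨x + x n • (-w), key (-w) ((Vn F n).neg_mem hw) m x hx, ?_⟩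
    have := hw n le_rfl
    change (x + x n • (-w)) + (x + x n • (-w)) n • w = x
    simp [this]

/-- the transvection as an element of `B`. -/
noncomputable def tv {n : ℕ} (w : Vn F n) : Bgrp F := ⟨_, trans_mem F w.2⟩

theorem tv_apply {n : ℕ} (w : Vn F n) (x : Vinf F) :
    ((tv F w : Bgrp F) : (Vinf F) ≃ₗ[F] (Vinf F)) x = x + x n • (w : Vinf F) := rfl

theorem act_tv_of_le {n : ℕ} (w : Vn F n) {X : Submodule F (Vinf F)} (h : X ≤ Vn F n) :
    act F (tv F w) X = X := by
  have : ∀ x ∈ X, ((tv F w : Bgrp F) : (Vinf F) ≃ₗ[F] (Vinf F)) x = x := by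
    intro x hx
    rw [tv_apply, h hx n le_rfl]; simp
  ext x
  constructor
  · rintro ⟨y, hy, rfl⟩
    have h2 := this y hy
    simp only [LinearEquiv.coe_coe]
    rw [h2]; exact hy
  · intro hx
    exact ⟨x, hx, this x hx⟩

/-- counting step. -/
theorem count_step {n : ℕ} {Y : Submodule F (Vinf F)} (hY : Y ≤ Vn F (n + 1))
    (hp : HasPivot F Y n) (b : Bgrp F) :
    (act F b (coordSpan F (pivSeq F (Y ⊓ Vn F n))) = Y ⊓ Vn F n →
      Nat.card {w : Vn F n // act F b (coordSpan F (pivSeq F Y)) = act F (tv F w) Y}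
        = Nat.card ↥(Y ⊓ Vn F n)) ∧
    (∀ w : Vn F n, act F b (coordSpan F (pivSeq F Y)) = act F (tv F w) Y →
      act F b (coordSpan F (pivSeq F (Y ⊓ Vn F n))) = Y ⊓ Vn F n) := by
  set Z := act F b (coordSpan F (pivSeq F Y)) with hZ
  have hZle : Z ≤ Vn F (n + 1) := act_le_Vn F b (coordSpan_pivSeq_le F hY)
  have hZn : Z ⊓ Vn F n = act F b (coordSpan F (pivSeq F (Y ⊓ Vn F n))) := by
    rw [hZ, act, map_inf_Vn F _ (b.2 n), coordSpan_pivSeq_inf]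
  have hYw : ∀ w : Vn F n, act F (tv F w) Y ⊓ Vn F n = Y ⊓ Vn F n := by
    intro w
    rw [act, map_inf_Vn F _ ((tv F w).2 n)]
    exact act_tv_of_le F w inf_le_right
  rw [← hZn]
  constructor
  · intro h
    have hpZ : HasPivot F Z n := by
      rw [← pivSeq_true, hZ, pivSeq_act, pivSeq_coordSpan, pivSeq_true]; exact hp
    obtain ⟨z, hz, hz1, hzn⟩ := hpZ
    obtain ⟨y, hy, hy1, hyn⟩ := hp
    have hd : z - y ∈ Vn F n :=
      mem_Vn_of_succ F ((Vn F (n+1)).sub_mem hz1 hy1) (by simp [hzn, hyn])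
    have key : ∀ w : Vn F n, Z = act F (tv F w) Y ↔ (w : Vinf F) - (z - y) ∈ Y ⊓ Vn F n := by
      intro w
      have hyw : y + (w : Vinf F) ∈ act F (tv F w) Y :=
        ⟨y, hy, by
          have := tv_apply F w y
          rw [hyn, one_smul] at this
          exact this⟩
      have hywn : (y + (w : Vinf F)) n = 1 := by simp [hyn, w.2 n le_rfl]
      have hiff : (w : Vinf F) - (z - y) ∈ Y ⊓ Vn F n ↔ y + (w : Vinf F) ∈ Z := by
        rw [← h, Submodule.mem_inf]
        have e : (w : Vinf F) - (z - y) = (y + w) - z := by abel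
        constructor
        · rintro ⟨h1, _⟩
          rw [e] at h1
          simpa using Z.add_mem h1 hz
        · intro h1
          refine ⟨?_, (Vn F n).sub_mem w.2 hd⟩
          rw [e]
          exact Z.sub_mem h1 hz
      rw [hiff]
      constructor
      · intro h1; rw [h1]; exact hyw
      · intro h1
        apply le_antisymm
        · exact eq_of_common F hZle (by rw [h, ← hYw w]; exact inf_le_left) h1 hyw hywn
        · exact eq_of_common F (act_le_Vn F (tv F w) hY)
            (by rw [hYw w, ← h]; exact inf_le_left) hyw h1 hywn
    refine Nat.card_congr
      { toFun := fun w => ⟨(w : Vinf F) - (z - y), (key w.1).1 w.2⟩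
        invFun := fun u => ⟨⟨(u : Vinf F) + (z - y), (Vn F n).add_mem u.2.2 hd⟩,
          (key _).2 (by simpa using u.2)⟩
        left_inv := fun w => by ext1; ext1; simp
        right_inv := fun u => by ext1; simp }
  · intro w hw
    rw [hw, hYw]

/-! ### Measurability and the Haar measure computation -/

theorem measurableSet_eval (v z : Vinf F) :
    MeasurableSet {b : Bgrp F | (b : (Vinf F) ≃ₗ[F] (Vinf F)) v = z} := by
  letI : MeasurableSpace (Vinf F) := ⊤
  haveI : DiscreteMeasurableSpace (Vinf F) := ⟨fun _ => trivial⟩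
  have h0 : Measurable (fun b : Bgrp F => fun i : ℕ =>
      ((b : (Vinf F) ≃ₗ[F] (Vinf F)) (Finsupp.single i 1))) := comap_measurable _
  have h1 : ∀ i : ℕ, Measurable (fun b : Bgrp F =>
      ((b : (Vinf F) ≃ₗ[F] (Vinf F)) (Finsupp.single i 1))) :=
    fun i => (measurable_pi_apply i).comp h0
  have h2 : Measurable (fun b : Bgrp F => ∑ i ∈ v.support,
      v i • ((b : (Vinf F) ≃ₗ[F] (Vinf F)) (Finsupp.single i 1))) := by
    refine Finset.measurable_sum _ fun i _ => ?_
    exact (Measurable.of_discrete (f := fun x : Vinf F => v i • x)).comp (h1 i)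
  have h3 : ∀ b : Bgrp F, (b : (Vinf F) ≃ₗ[F] (Vinf F)) v = ∑ i ∈ v.support,
      v i • ((b : (Vinf F) ≃ₗ[F] (Vinf F)) (Finsupp.single i 1)) := by
    intro b
    conv_lhs => rw [← Finsupp.sum_single v]
    rw [Finsupp.sum, map_sum]
    refine Finset.sum_congr rfl fun i _ => ?_
    rw [← map_smul]
    simp
  simp_rw [h3]
  exact h2 (measurableSet_singleton z)

theorem measurableSet_act (C Z : Submodule F (Vinf F)) :
    MeasurableSet {b : Bgrp F | act F b C = Z} := by
  have h : {b : Bgrp F | act F b C = Z}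
      = (⋂ v : C, ⋃ z : Z, {b : Bgrp F | (b : (Vinf F) ≃ₗ[F] (Vinf F)) v = z}) ∩
        (⋂ z : Z, ⋃ v : C, {b : Bgrp F | (b : (Vinf F) ≃ₗ[F] (Vinf F)) v = z}) := by
    ext b
    simp only [Set.mem_ofPred_eq, Set.mem_inter_iff, Set.mem_iInter, Set.mem_iUnion]
    constructor
    · rintro rfl
      refine ⟨fun v => ⟨⟨_, ⟨v, v.2, rfl⟩⟩, rfl⟩, ?_⟩
      rintro ⟨z, v, hv, rfl⟩
      exact ⟨⟨v, hv⟩, rfl⟩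
    · rintro ⟨h1, h2⟩
      apply le_antisymm
      · rintro _ ⟨v, hv, rfl⟩
        obtain ⟨z, hz⟩ := h1 ⟨v, hv⟩
        have : (b : (Vinf F) ≃ₗ[F] (Vinf F)) v ∈ Z := by
          rw [show (b : (Vinf F) ≃ₗ[F] (Vinf F)) v = z from hz]; exact z.2
        exact this
      · intro z hz
        obtain ⟨v, hv⟩ := h2 ⟨z, hz⟩
        exact ⟨v, v.2, hv⟩
  rw [h]
  exact (MeasurableSet.iInter fun v => MeasurableSet.iUnion fun z => measurableSet_eval F _ _).inter
    (MeasurableSet.iInter fun v => MeasurableSet.iUnion fun z => measurableSet_eval F _ _)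

theorem act_mul (g h : (Vinf F) ≃ₗ[F] (Vinf F)) (X : Submodule F (Vinf F)) :
    act F (g * h) X = act F g (act F h X) := by
  rw [act, act, act, ← Submodule.map_comp]
  rfl

theorem act_one (X : Submodule F (Vinf F)) : act F 1 X = X := Submodule.map_id X

theorem act_inv_act (g : (Vinf F) ≃ₗ[F] (Vinf F)) (X : Submodule F (Vinf F)) :
    act F g⁻¹ (act F g X) = X := by
  rw [← act_mul, inv_mul_cancel, act_one]

theorem act_act_inv (g : (Vinf F) ≃ₗ[F] (Vinf F)) (X : Submodule F (Vinf F)) :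
    act F g (act F g⁻¹ X) = X := by
  rw [← act_mul, mul_inv_cancel, act_one]

/-- The Haar measure of the set of elements of `B` mapping the coordinate subspace to `Y`. -/
noncomputable def PB (μB : Measure ↥(Bgrp F)) (Y : Submodule F (Vinf F)) : ENNReal :=
  μB {b : Bgrp F | act F b (coordSpan F (pivSeq F Y)) = Y}

theorem PB_step (μB : Measure ↥(Bgrp F))
    (hμBinv : ∀ (b : ↥(Bgrp F)) (S : Set ↥(Bgrp F)), MeasurableSet S →
      μB ((fun x => b * x) ⁻¹' S) = μB S)
    {n : ℕ} {Y : Submodule F (Vinf F)} (hY : Y ≤ Vn F (n + 1)) (hp : HasPivot F Y n) :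
    (Fintype.card F : ENNReal) ^ n * PB F μB Y
      = (Fintype.card F : ENNReal) ^ (Module.finrank F ↥(Y ⊓ Vn F n))
        * PB F μB (Y ⊓ Vn F n) := by
  classical
  haveI : Fintype (Vn F n) := Fintype.ofFinite _
  set C := coordSpan F (pivSeq F Y) with hC
  set S : Vn F n → Set (Bgrp F) := fun w => {b | act F b C = act F (tv F w) Y} with hS
  set S' : Set (Bgrp F) :=
    {b | act F b (coordSpan F (pivSeq F (Y ⊓ Vn F n))) = Y ⊓ Vn F n} with hS'
  have hSm : ∀ w, MeasurableSet (S w) := fun w => measurableSet_act F _ _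
  have hS'm : MeasurableSet S' := measurableSet_act F _ _
  have h1 : ∀ w, μB (S w) = PB F μB Y := by
    intro w
    refine Eq.trans ?_ (hμBinv (tv F w)⁻¹ {b | act F b C = Y} (measurableSet_act F _ _))
    congr 1
    ext b
    simp only [hS, Set.mem_ofPred_eq, Set.mem_preimage, Subgroup.coe_mul, Subgroup.coe_inv]
    rw [act_mul]
    constructor
    · intro h; rw [h, act_inv_act]
    · intro h; rw [← h, act_act_inv]
  have h2 : ∀ b : Bgrp F, ∑ w : Vn F n, (S w).indicator (fun _ => (1 : ENNReal)) b
      = S'.indicator (fun _ => (Nat.card ↥(Y ⊓ Vn F n) : ENNReal)) b := by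
    intro b
    obtain ⟨ha, hb⟩ := count_step F hY hp b
    by_cases h : b ∈ S'
    · rw [Set.indicator_of_mem h, ← ha h, Nat.card_eq_fintype_card, Fintype.card_subtype]
      simp only [Set.indicator_apply]
      rw [Finset.sum_boole]
      rfl
    · rw [Set.indicator_of_notMem h]
      refine Finset.sum_eq_zero fun w _ => Set.indicator_of_notMem ?_ _
      exact fun hw => h (hb w hw)
  have h3 : ∑ w : Vn F n, μB (S w) = (Nat.card ↥(Y ⊓ Vn F n) : ENNReal) * μB S' := by
    calc ∑ w : Vn F n, μB (S w)
        = ∑ w : Vn F n, ∫⁻ b, (S w).indicator (fun _ => (1 : ENNReal)) b ∂μB := by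
          refine Finset.sum_congr rfl fun w _ => ?_
          rw [lintegral_indicator_const (hSm w), one_mul]
      _ = ∫⁻ b, ∑ w : Vn F n, (S w).indicator (fun _ => (1 : ENNReal)) b ∂μB := by
          rw [lintegral_finsetSum]
          exact fun w _ => measurable_const.indicator (hSm w)
      _ = _ := by
          simp_rw [h2]
          rw [lintegral_indicator_const hS'm]
  simp_rw [h1] at h3
  rw [Finset.sum_const, Finset.card_univ, nsmul_eq_mul, ← Nat.card_eq_fintype_card,
    Module.natCard_eq_pow_finrank (K := F) (V := Vn F n), finrank_Vn,
    Module.natCard_eq_pow_finrank (K := F) (V := ↥(Y ⊓ Vn F n)), Nat.card_eq_fintype_card] at h3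
  push_cast at h3
  exact h3

/-- `E_n(X) = ∑_{k<n} (k+1) Sym(X)_k`. -/
noncomputable def En (n : ℕ) (X : Submodule F (Vinf F)) : ℕ :=
  ∑ k ∈ Finset.range n, (k + 1) * symInc F X k

theorem En_inf {m n : ℕ} (h : m ≤ n) (X : Submodule F (Vinf F)) :
    En F m (X ⊓ Vn F n) = En F m X :=
  Finset.sum_congr rfl fun k hk => by
    rw [symInc_inf F (lt_of_lt_of_le (Finset.mem_range.1 hk) h)]

theorem PB_formula (μB : Measure ↥(Bgrp F)) (hμBprob : IsProbabilityMeasure μB)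
    (hμBinv : ∀ (b : ↥(Bgrp F)) (S : Set ↥(Bgrp F)), MeasurableSet S →
      μB ((fun x => b * x) ⁻¹' S) = μB S)
    (n : ℕ) : ∀ Y : Submodule F (Vinf F), Y ≤ Vn F n →
    PB F μB Y * (Fintype.card F : ENNReal) ^ (En F n Y)
      = (Fintype.card F : ENNReal) ^ (∑ i ∈ Finset.range (Module.finrank F Y), (i + 1)) := by
  induction n with
  | zero =>
    intro Y hY
    have hY0 : Y = ⊥ := by rwa [Vn_zero, le_bot_iff] at hY
    subst hY0
    have hc : coordSpan F (pivSeq F (⊥ : Submodule F (Vinf F))) = ⊥ := by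
      have := coordSpan_pivSeq_le F hY
      rwa [Vn_zero, le_bot_iff] at this
    have : PB F μB (⊥ : Submodule F (Vinf F)) = 1 := by
      rw [PB, hc]
      simp [act]
    rw [this]
    simp [En]
  | succ n ih =>
    intro Y hY
    have ihY := ih (Y ⊓ Vn F n) inf_le_right
    rw [En_inf F le_rfl] at ihY
    have hYn : Y ⊓ Vn F (n + 1) = Y := inf_eq_left.2 hY
    by_cases hp : HasPivot F Y n
    · have hs : symInc F Y n = 1 := by rw [symInc_eq, if_pos ((pivSeq_true F).2 hp)]
      have hd := step_true F hp
      rw [hYn] at hd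
      have hst := PB_step F μB hμBinv hY hp
      rw [hd, Finset.sum_range_succ, En, Finset.sum_range_succ, ← En, hs, mul_one]
      calc PB F μB Y * (Fintype.card F : ENNReal) ^ (En F n Y + (n + 1))
          = ((Fintype.card F : ENNReal) ^ n * PB F μB Y) *
              ((Fintype.card F : ENNReal) ^ (En F n Y) * (Fintype.card F : ENNReal)) := by ring
        _ = (PB F μB (Y ⊓ Vn F n) * (Fintype.card F : ENNReal) ^ (En F n Y)) *
              ((Fintype.card F : ENNReal) ^ (Module.finrank F ↥(Y ⊓ Vn F n))
                * (Fintype.card F : ENNReal)) := by rw [hst]; ring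
        _ = _ := by rw [ihY]; ring
    · have hs : symInc F Y n = 0 := by
        rw [symInc_eq, if_neg (fun h => hp ((pivSeq_true F).1 h))]
      have hst := step_false F hp
      rw [hYn] at hst
      rw [En, Finset.sum_range_succ, ← En, hs, mul_zero, add_zero]
      rw [← hst] at ihY
      exact ihY

theorem ber_formula (a b : ENNReal) {n : ℕ} {Y : Submodule F (Vinf F)} (hY : Y ≤ Vn F n) :
    ∏ i : Fin n, (if pivSeq F Y i = true then a else b)
      = a ^ (Module.finrank F Y) * b ^ (n - Module.finrank F Y) := by
  rw [Fin.prod_univ_eq_prod_range (fun i => if pivSeq F Y i = true then a else b) n,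
    Finset.prod_ite, Finset.prod_const, Finset.prod_const]
  have h1 : (Finset.filter (fun i => pivSeq F Y i = true) (Finset.range n)).card
      = Module.finrank F Y := by
    conv_rhs => rw [← inf_eq_left.2 hY]
    rw [finrank_eq_sum, Finset.card_filter]
    exact Finset.sum_congr rfl fun k _ => (symInc_eq F Y k).symm
  have h2 := Finset.card_filter_add_card_filter_not (s := Finset.range n)
    (fun i => pivSeq F Y i = true)
  rw [h1, Finset.card_range] at h2
  have h3 : (Finset.filter (fun i => ¬ pivSeq F Y i = true) (Finset.range n)).card
      = n - Module.finrank F Y := by omega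
  rw [h1, h3]

/-! ### Cylinders -/

/-- the cylinder set. -/
def cyl (n : ℕ) (Y : Submodule F (Vinf F)) : Set (Submodule F (Vinf F)) := {X | X ⊓ Vn F n = Y}

theorem measurableSet_cyl (n : ℕ) (Y : Submodule F (Vinf F)) : MeasurableSet (cyl F n Y) :=
  MeasurableSpace.measurableSet_generateFrom ⟨n, Y, rfl⟩

theorem cyl_empty {n : ℕ} {Y : Submodule F (Vinf F)} (h : ¬ Y ≤ Vn F n) : cyl F n Y = ∅ := by
  rw [Set.eq_empty_iff_forall_notMem]
  rintro X hX
  exact h (by rw [← show X ⊓ Vn F n = Y from hX]; exact inf_le_right)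

theorem cyl_union {m n : ℕ} (h : m ≤ n) (Y : Submodule F (Vinf F)) :
    cyl F m Y = ⋃ Z ∈ {Z : Submodule F (Vinf F) | Z ≤ Vn F n ∧ Z ⊓ Vn F m = Y}, cyl F n Z := by
  ext X
  simp only [Set.mem_iUnion, Set.mem_ofPred_eq, cyl, exists_prop]
  constructor
  · intro hX
    refine ⟨X ⊓ Vn F n, ⟨inf_le_right, ?_⟩, rfl⟩
    rw [inf_assoc, inf_eq_right.2 (Vn_mono F h), hX]
  · rintro ⟨Z, ⟨_, hZ⟩, rfl⟩
    rw [← hZ, inf_assoc, inf_eq_right.2 (Vn_mono F h)]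

/-- cylinders of level at least `N`. -/
def cyls (N : ℕ) : Set (Set (Submodule F (Vinf F))) :=
  {A | ∃ n, N ≤ n ∧ ∃ Y : Submodule F (Vinf F), A = cyl F n Y}

theorem gen_cyls (N : ℕ) : mGr F = MeasurableSpace.generateFrom (cyls F N) := by
  apply le_antisymm
  · refine MeasurableSpace.generateFrom_le ?_
    rintro _ ⟨m, Y, rfl⟩
    change MeasurableSet[MeasurableSpace.generateFrom (cyls F N)] (cyl F m Y)
    rw [cyl_union F (le_max_left m N) Y]
    refine MeasurableSet.biUnion ?_ ?_
    · exact ((finite_le_Vn F (max m N)).subset fun Z hZ => hZ.1).countable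
    · intro Z _
      exact MeasurableSpace.measurableSet_generateFrom ⟨_, le_max_right m N, Z, rfl⟩
  · refine MeasurableSpace.generateFrom_le ?_
    rintro _ ⟨n, _, Y, rfl⟩
    exact measurableSet_cyl F n Y

theorem cyl_inter {m n : ℕ} (h : m ≤ n) {Y Z : Submodule F (Vinf F)}
    (hne : (cyl F m Y ∩ cyl F n Z).Nonempty) : cyl F m Y ∩ cyl F n Z = cyl F n Z := by
  obtain ⟨X, hX1, hX2⟩ := hne
  apply Set.inter_eq_right.2
  intro W hW
  have e : ∀ W : Submodule F (Vinf F), W ⊓ Vn F m = (W ⊓ Vn F n) ⊓ Vn F m := by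
    intro W
    rw [inf_assoc, inf_eq_right.2 (Vn_mono F h)]
  change W ⊓ Vn F m = Y
  change X ⊓ Vn F m = Y at hX1
  change X ⊓ Vn F n = Z at hX2
  change W ⊓ Vn F n = Z at hW
  rw [e, hW, ← hX1, e X, hX2]

theorem pi_cyls (N : ℕ) : IsPiSystem (cyls F N) := by
  rintro _ ⟨m, hm, Y, rfl⟩ _ ⟨n, hn, Z, rfl⟩ hne
  rcases le_total m n with h | h
  · rw [cyl_inter F h hne]; exact ⟨n, hn, Z, rfl⟩
  · rw [Set.inter_comm] at hne ⊢
    rw [cyl_inter F h hne]; exact ⟨m, hm, Y, rfl⟩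

theorem act_mem_cyl_iff {g : (Vinf F) ≃ₗ[F] (Vinf F)} {n : ℕ}
    (h : Submodule.map (g : (Vinf F) →ₗ[F] (Vinf F)) (Vn F n) = Vn F n)
    (X Y : Submodule F (Vinf F)) : act F g X ∈ cyl F n (act F g Y) ↔ X ∈ cyl F n Y := by
  change act F g X ⊓ Vn F n = act F g Y ↔ X ⊓ Vn F n = Y
  rw [act, map_inf_Vn F g h]
  exact (Submodule.map_injective_of_injective g.injective).eq_iff

/-- the exponent of the cocycle, as a finite sum. -/
theorem exponent_eq {g : (Vinf F) ≃ₗ[F] (Vinf F)} {N : ℕ}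
    (hg : ∀ n : ℕ, N ≤ n → Submodule.map (g : (Vinf F) →ₗ[F] (Vinf F)) (Vn F n) = Vn F n)
    {n : ℕ} (hn : N ≤ n) (X : Submodule F (Vinf F)) :
    (Function.support (fun k : ℕ => ((k : ℤ) + 1) *
        ((symInc F X k : ℤ)
          - (symInc F (Submodule.map (g : (Vinf F) →ₗ[F] (Vinf F)) X) k : ℤ)))
      ⊆ ↑(Finset.range n)) ∧
    ∑ᶠ k : ℕ, ((k : ℤ) + 1) * ((symInc F X k : ℤ)
          - (symInc F (Submodule.map (g : (Vinf F) →ₗ[F] (Vinf F)) X) k : ℤ))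
      = (En F n X : ℤ) - (En F n (act F g X) : ℤ) := by
  have hsub : Function.support (fun k : ℕ => ((k : ℤ) + 1) *
        ((symInc F X k : ℤ)
          - (symInc F (Submodule.map (g : (Vinf F) →ₗ[F] (Vinf F)) X) k : ℤ)))
      ⊆ ↑(Finset.range n) := by
    intro k hk
    rw [Finset.coe_range, Set.mem_Iio]
    by_contra hkn
    push Not at hkn
    apply hk
    simp only
    rw [symInc_map F g (hg k (hn.trans hkn)) (hg (k+1) (by omega))]
    simp
  refine ⟨hsub, ?_⟩
  rw [finsum_eq_sum_of_support_subset _ hsub, En, En]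
  push_cast
  rw [← Finset.sum_sub_distrib]
  refine Finset.sum_congr rfl fun k _ => ?_
  ring

/-- **Proposition 5.7** (fundamental cocycle of the `GLB`-action on the grassmannian).
`μBer` is the Bernoulli measure on `{0,1}^ℕ` with parameter `t₁`; `μB` is the Haar probability
measure of the compact group `B` (characterized as a left-invariant probability measure);
`η = η_{t₁,t₂}` is the pushforward of `μBer ⊗ μB` under `φ(x,g) = g·C(x)`. Then for every
`g ∈ GLB` and every `X ∈ Gr(V)` the sum `∑_k k·(Sym(X)_k - Sym(gX)_k)` has finitely many
nonzero terms, and for every measurable `A ⊆ Gr(V)`,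
`η(g·A) = ∫_A q^{∑_k k·(Sym(X)_k - Sym(gX)_k)} dη(X)`. -/
theorem eta_quasi_invariant_with_cocycle
    (t₁ t₂ : ℝ) (ht₁ : 0 ≤ t₁) (ht₂ : 0 ≤ t₂) (hsum : t₁ + t₂ = 1)
    (μBer : Measure (ℕ → Bool))
    (hBer : ∀ (n : ℕ) (c : Fin n → Bool),
      μBer {ω | ∀ i : Fin n, ω (i : ℕ) = c i}
        = ∏ i : Fin n, ENNReal.ofReal (if c i then t₁ else t₂))
    (μB : Measure ↥(Bgrp F)) (hμBprob : IsProbabilityMeasure μB)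
    (hμBinv : ∀ (b : ↥(Bgrp F)) (S : Set ↥(Bgrp F)), MeasurableSet S →
      μB ((fun x => b * x) ⁻¹' S) = μB S)
    (η : Measure (Submodule F (Vinf F)))
    (hη : ∀ A : Set (Submodule F (Vinf F)), MeasurableSet A →
      η A = (μBer.prod μB) (phiMap F ⁻¹' A)) :
    (∀ g : (Vinf F) ≃ₗ[F] (Vinf F), g ∈ GLBgrp F → ∀ X : Submodule F (Vinf F),
      (Function.support (fun k : ℕ => ((k : ℤ) + 1) *
        ((symInc F X k : ℤ)
          - (symInc F (Submodule.map (g : (Vinf F) →ₗ[F] (Vinf F)) X) k : ℤ)))).Finite) ∧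
    (∀ g : (Vinf F) ≃ₗ[F] (Vinf F), g ∈ GLBgrp F →
      ∀ A : Set (Submodule F (Vinf F)), MeasurableSet A →
      η ((fun X => Submodule.map (g : (Vinf F) →ₗ[F] (Vinf F)) X) '' A)
        = ∫⁻ X in A, ENNReal.ofReal ((Fintype.card F : ℝ) ^
            (∑ᶠ k : ℕ, ((k : ℤ) + 1) *
              ((symInc F X k : ℤ)
                - (symInc F (Submodule.map (g : (Vinf F) →ₗ[F] (Vinf F)) X) k : ℤ)))) ∂η) := by
  have hq0 : (Fintype.card F : ENNReal) ≠ 0 := by simp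
  have hqT : (Fintype.card F : ENNReal) ≠ ⊤ := ENNReal.natCast_ne_top _
  have hcyl : ∀ (n : ℕ) (Y : Submodule F (Vinf F)), Y ≤ Vn F n →
      η (cyl F n Y) = (ENNReal.ofReal t₁ ^ (Module.finrank F Y)
        * ENNReal.ofReal t₂ ^ (n - Module.finrank F Y)) * PB F μB Y := by
    intro n Y hY
    rw [hη _ (measurableSet_cyl F n Y), cyl, phi_preimage F hY, Measure.prod_prod,
      hBer n (fun i => pivSeq F Y i), PB, ← ber_formula F _ _ hY]
    congr 1
    refine Finset.prod_congr rfl fun i _ => ?_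
    split_ifs <;> rfl
  have hcylT : ∀ (n : ℕ) (Y : Submodule F (Vinf F)), η (cyl F n Y) ≠ ⊤ := by
    intro n Y
    by_cases hY : Y ≤ Vn F n
    · rw [hcyl n Y hY]
      exact ENNReal.mul_ne_top (ENNReal.mul_ne_top (ENNReal.pow_ne_top ENNReal.ofReal_ne_top)
        (ENNReal.pow_ne_top ENNReal.ofReal_ne_top)) (measure_ne_top μB _)
    · rw [cyl_empty F hY]; simp
  refine ⟨?_, ?_⟩
  · rintro g ⟨N, hg⟩ X
    exact (Finset.finite_toSet _).subset (exponent_eq F hg le_rfl X).1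
  rintro g ⟨N, hg⟩ A hA
  have hgle : ∀ n, N ≤ n → ∀ Y : Submodule F (Vinf F), act F g Y ≤ Vn F n ↔ Y ≤ Vn F n := by
    intro n hn Y
    conv_lhs => rw [← hg n hn]
    exact Submodule.map_le_map_iff_of_injective g.injective _ _
  -- the key identity on cylinders
  have hkey : ∀ n, N ≤ n → ∀ Y : Submodule F (Vinf F),
      η (cyl F n (act F g Y)) = ENNReal.ofReal ((Fintype.card F : ℝ) ^
        ((En F n Y : ℤ) - (En F n (act F g Y) : ℤ))) * η (cyl F n Y) := by
    intro n hn Y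
    by_cases hY : Y ≤ Vn F n
    · have hgY : act F g Y ≤ Vn F n := (hgle n hn Y).2 hY
      have hd : Module.finrank F ↥(act F g Y) = Module.finrank F Y :=
        LinearEquiv.finrank_map_eq g Y
      have h1 := PB_formula F μB hμBprob hμBinv n Y hY
      have h2 := PB_formula F μB hμBprob hμBinv n _ hgY
      rw [hd, ← h1] at h2
      have h3 : ENNReal.ofReal ((Fintype.card F : ℝ) ^
          ((En F n Y : ℤ) - (En F n (act F g Y) : ℤ)))
          = (Fintype.card F : ENNReal) ^ (En F n Y)
            / (Fintype.card F : ENNReal) ^ (En F n (act F g Y)) := by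
        have hpos : (0 : ℝ) < Fintype.card F := by exact_mod_cast Fintype.card_pos
        rw [zpow_sub₀ hpos.ne', zpow_natCast, zpow_natCast,
          ENNReal.ofReal_div_of_pos (pow_pos hpos _), ENNReal.ofReal_pow hpos.le,
          ENNReal.ofReal_pow hpos.le, ENNReal.ofReal_natCast]
      have h4 : PB F μB (act F g Y) = PB F μB Y * (Fintype.card F : ENNReal) ^ (En F n Y)
          / (Fintype.card F : ENNReal) ^ (En F n (act F g Y)) := by
        rw [ENNReal.eq_div_iff (pow_ne_zero _ hq0) (ENNReal.pow_ne_top hqT), mul_comm]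
        exact h2
      rw [hcyl n Y hY, hcyl n _ hgY, hd, h3, h4, ENNReal.div_eq_inv_mul, ENNReal.div_eq_inv_mul]
      ring
    · rw [cyl_empty F hY, cyl_empty F (fun h => hY ((hgle n hn Y).1 h))]
      simp
  set f : Submodule F (Vinf F) → ENNReal := fun X => ENNReal.ofReal ((Fintype.card F : ℝ) ^
            (∑ᶠ k : ℕ, ((k : ℤ) + 1) *
              ((symInc F X k : ℤ)
                - (symInc F (Submodule.map (g : (Vinf F) →ₗ[F] (Vinf F)) X) k : ℤ)))) with hf
  have hfcyl : ∀ n, N ≤ n → ∀ Y : Submodule F (Vinf F), ∀ X ∈ cyl F n Y,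
      f X = ENNReal.ofReal ((Fintype.card F : ℝ) ^
        ((En F n Y : ℤ) - (En F n (act F g Y) : ℤ))) := by
    intro n hn Y X hX
    have hX' : X ⊓ Vn F n = Y := hX
    simp only [hf]
    rw [(exponent_eq F hg hn X).2, ← hX', En_inf F le_rfl]
    rw [show act F g (X ⊓ Vn F n) = act F g X ⊓ Vn F n from (map_inf_Vn F g (hg n hn) X).symm,
      En_inf F le_rfl]
  have hmeas : Measurable (fun X => act F g⁻¹ X) := by
    have h : @Measurable _ _ (mGr F) (MeasurableSpace.generateFrom (cyls F N))
        (fun X => act F g⁻¹ X) := by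
      refine measurable_generateFrom ?_
      rintro _ ⟨n, hn, Y, rfl⟩
      have e : (fun X => act F g⁻¹ X) ⁻¹' (cyl F n Y) = cyl F n (act F g Y) := by
        ext X
        rw [Set.mem_preimage, ← act_mem_cyl_iff F (hg n hn), act_act_inv]
      rw [e]
      exact measurableSet_cyl F _ _
    rwa [← gen_cyls F N] at h
  have hEq : η.map (fun X => act F g⁻¹ X) = η.withDensity f := by
    refine Measure.ext_of_generateFrom_of_cover_subset (gen_cyls F N) (pi_cyls F N)
      (T := (fun Y => cyl F N Y) '' {Y | Y ≤ Vn F N}) ?_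
      ((finite_le_Vn F N).image _).countable ?_ ?_ ?_
    · rintro _ ⟨Y, _, rfl⟩
      exact ⟨N, le_rfl, Y, rfl⟩
    · rw [Set.eq_univ_iff_forall]
      intro X
      exact ⟨_, ⟨X ⊓ Vn F N, (inf_le_right : X ⊓ Vn F N ≤ Vn F N), rfl⟩, rfl⟩
    · rintro _ ⟨Y, _, rfl⟩
      rw [Measure.map_apply hmeas (measurableSet_cyl F _ _)]
      have e : (fun X => act F g⁻¹ X) ⁻¹' (cyl F N Y) = cyl F N (act F g Y) := by
        ext X
        rw [Set.mem_preimage, ← act_mem_cyl_iff F (hg N le_rfl), act_act_inv]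
      rw [e]
      exact hcylT _ _
    · rintro _ ⟨n, hn, Y, rfl⟩
      have e : (fun X => act F g⁻¹ X) ⁻¹' (cyl F n Y) = cyl F n (act F g Y) := by
        ext X
        rw [Set.mem_preimage, ← act_mem_cyl_iff F (hg n hn), act_act_inv]
      rw [Measure.map_apply hmeas (measurableSet_cyl F _ _), e,
        withDensity_apply _ (measurableSet_cyl F _ _),
        setLIntegral_congr_fun (measurableSet_cyl F n Y) (hfcyl n hn Y), setLIntegral_const]
      exact hkey n hn Y
  have himg : (fun X => Submodule.map (g : (Vinf F) →ₗ[F] (Vinf F)) X) '' A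
      = (fun X => act F g⁻¹ X) ⁻¹' A := by
    ext X
    constructor
    · rintro ⟨Y, hY, rfl⟩
      change act F g⁻¹ (act F g Y) ∈ A
      rwa [act_inv_act]
    · intro hX
      exact ⟨_, hX, act_act_inv F g X⟩
  rw [himg, ← Measure.map_apply hmeas hA, hEq, withDensity_apply _ hA]
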